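/- Let n ≥ 1 and δ ∈ (0, n]. Suppose f ∈ nL¹(ℝⁿ, H̃^δ_∞) is nonnegative and is an nL¹-limit of continuous functions. Then f(x) = limsup_{r→0⁺} (1/H̃^δ_∞(B(x,r))) ∫_{B(x,r)} f(y) dH̃^δ_∞(y) for H̃^δ_∞-almost every x ∈ ℝⁿ. -/

import Mathlib

open MeasureTheory Set Metric Filter Topology
open scoped ENNReal

noncomputable section

/-- Euclidean space `ℝⁿ`. -/
abbrev En (n : ℕ) : Type := EuclideanSpace ℝ (Fin n)

/-- The half-open dyadic cube `2^k (m + [0,1)ⁿ)`, `k : ℤ`, `m : ℤⁿ`. -/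
def dyadicCube (n : ℕ) (k : ℤ) (m : Fin n → ℤ) : Set (En n) :=
  {x | ∀ i, (m i : ℝ) * 2 ^ k ≤ x i ∧ x i < ((m i : ℝ) + 1) * 2 ^ k}

/-- The `δ`-dimensional dyadic Hausdorff content `H̃^δ_∞`: the infimum of `Σ ℓ(Q_i)^δ`
over all countable collections of dyadic cubes whose union's interior covers `E`. -/
def dyadicContent (n : ℕ) (δ : ℝ) (E : Set (En n)) : ℝ≥0∞ :=
  ⨅ (c : ℕ → ℤ × (Fin n → ℤ))
    (_ : E ⊆ interior (⋃ i, dyadicCube n (c i).1 (c i).2)),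
    ∑' i, ENNReal.ofReal (((2 : ℝ) ^ (c i).1) ^ δ)

/-- The Choquet integral `∫_Ω f dH̃^δ_∞ := ∫_0^∞ H̃^δ_∞({x ∈ Ω : f x > t}) dt`
of a `[0,∞]`-valued function over `Ω ⊆ ℝⁿ`. -/
def choquetIntegral (n : ℕ) (δ : ℝ) (Ω : Set (En n)) (f : En n → ℝ≥0∞) : ℝ≥0∞ :=
  ∫⁻ t in Ioi (0 : ℝ), dyadicContent n δ {x | x ∈ Ω ∧ ENNReal.ofReal t < f x}

/-- The Choquet integral `∫_Ω |f| dH̃^δ_∞` of a real-valued function. -/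
def choquetIntegralAbs (n : ℕ) (δ : ℝ) (Ω : Set (En n)) (f : En n → ℝ) : ℝ≥0∞ :=
  choquetIntegral n δ Ω (fun x => ENNReal.ofReal |f x|)

/-- The Choquet integral `∫_Ω |f| dH̃^δ_∞` of an extended-real-valued function. -/
def choquetIntegralEAbs (n : ℕ) (δ : ℝ) (Ω : Set (En n)) (f : En n → EReal) : ℝ≥0∞ :=
  choquetIntegral n δ Ω (fun x => (f x).abs)

/-- The ball average `f^δ_{B(x,r)} := (1/H̃^δ_∞(B(x,r))) ∫_{B(x,r)} f dH̃^δ_∞`. -/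
def ballAvg (n : ℕ) (δ : ℝ) (f : En n → ℝ≥0∞) (x : En n) (r : ℝ) : ℝ≥0∞ :=
  choquetIntegral n δ (ball x r) f / dyadicContent n δ (ball x r)

/-- The Hausdorff-content centred maximal function `M^δ f(x)`. -/
def maximal (n : ℕ) (δ : ℝ) (f : En n → ℝ≥0∞) (x : En n) : ℝ≥0∞ :=
  ⨆ (r : ℝ) (_ : 0 < r), ballAvg n δ f x r

/-- `f^δ_*(x) := limsup_{r→0⁺} (1/H̃^δ_∞(B(x,r))) ∫_{B(x,r)} |f(y) − f(x)| dH̃^δ_∞(y)`. -/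
def lebDev (n : ℕ) (δ : ℝ) (f : En n → ℝ) (x : En n) : ℝ≥0∞ :=
  limsup (fun r : ℝ => choquetIntegralAbs n δ (ball x r) (fun y => f y - f x) /
    dyadicContent n δ (ball x r)) (𝓝[>] (0 : ℝ))

/-- `limsup_{r→0⁺} f^δ_{B(x,r)}` of the ball averages. -/
def limsupAvg (n : ℕ) (δ : ℝ) (f : En n → ℝ≥0∞) (x : En n) : ℝ≥0∞ :=
  limsup (fun r : ℝ => ballAvg n δ f x r) (𝓝[>] (0 : ℝ))


/-- index type of dyadic cubes -/
abbrev Cub (n : ℕ) : Type := ℤ × (Fin n → ℤ)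

def cset {n : ℕ} (Q : Cub n) : Set (En n) := dyadicCube n Q.1 Q.2

def wt {n : ℕ} (δ : ℝ) (Q : Cub n) : ℝ≥0∞ := ENNReal.ofReal (((2 : ℝ) ^ Q.1) ^ δ)

lemma mem_cset {n : ℕ} (Q : Cub n) (x : En n) :
    x ∈ cset Q ↔ ∀ i, ⌊x i / 2 ^ Q.1⌋ = Q.2 i := by
  unfold cset dyadicCube
  simp only [mem_ofPred_eq]
  refine forall_congr' fun i => ?_
  have h : (0 : ℝ) < 2 ^ Q.1 := by positivity
  rw [Int.floor_eq_iff, le_div_iff₀ h, div_lt_iff₀ h]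

lemma wt_pos {n : ℕ} (δ : ℝ) (Q : Cub n) : 0 < wt δ Q := by
  unfold wt
  rw [ENNReal.ofReal_pos]
  positivity

lemma wt_ne_top {n : ℕ} (δ : ℝ) (Q : Cub n) : wt δ Q ≠ ⊤ := ENNReal.ofReal_ne_top

lemma content_le_of_countable {n : ℕ} {δ : ℝ} (hδ : 0 < δ) {ι : Type*} [Countable ι]
    (c : ι → Cub n) (E : Set (En n)) (hE : E ⊆ interior (⋃ i, cset (c i))) :
    dyadicContent n δ E ≤ ∑' i, wt δ (c i) := by
  refine ENNReal.le_of_forall_pos_le_add fun ε hε _ => ?_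
  obtain ⟨ε', hε', hsum⟩ := ENNReal.exists_pos_sum_of_countable
    (ε := (ε : ℝ≥0∞)) (by simpa using hε.ne') ℕ
  have hk : ∀ j : ℕ, ∃ k : ℤ, ENNReal.ofReal (((2 : ℝ) ^ k) ^ δ) ≤ ε' j := by
    intro j
    have h1 : Tendsto (fun m : ℕ => (((2 : ℝ) ^ (-(m : ℤ))) ^ δ)) atTop (𝓝 0) := by
      have h2 : Tendsto (fun m : ℕ => ((2 : ℝ) ^ (-(m : ℤ)))) atTop (𝓝 0) := by
        have := tendsto_pow_atTop_nhds_zero_of_lt_one (r := (2⁻¹ : ℝ)) (by norm_num) (by norm_num)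
        refine this.congr fun m => ?_
        simp
      have h3 := h2.rpow_const (p := δ) (Or.inr hδ.le)
      rwa [Real.zero_rpow hδ.ne'] at h3
    have h4 := (h1.eventually_lt_const (show (0 : ℝ) < ε' j from by exact_mod_cast hε' j)).exists
    obtain ⟨m, hm⟩ := h4
    refine ⟨-(m : ℤ), ?_⟩
    rw [ENNReal.ofReal_le_iff_le_toReal ENNReal.coe_ne_top]
    simpa using hm.le
  choose k hk using hk
  let c' : ι ⊕ ℕ → Cub n := Sum.elim c (fun j => (k j, 0))
  obtain ⟨e⟩ : Nonempty (ℕ ≃ ι ⊕ ℕ) := by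
    have : Countable (ι ⊕ ℕ) := inferInstance
    have : Infinite (ι ⊕ ℕ) := inferInstance
    exact nonempty_equiv_of_countable
  have h1 : dyadicContent n δ E ≤ ∑' i, wt δ (c' (e i)) := by
    unfold dyadicContent
    refine iInf₂_le (fun i => c' (e i)) (hE.trans (interior_mono ?_))
    refine iUnion_subset fun i => ?_
    intro x hx
    refine mem_iUnion.2 ⟨e.symm (Sum.inl i), ?_⟩
    simpa [c', cset] using hx
  refine h1.trans ?_
  rw [e.tsum_eq (fun i => wt δ (c' i)), ENNReal.summable.tsum_sum ENNReal.summable]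
  refine add_le_add le_rfl (le_trans ?_ hsum.le)
  exact ENNReal.tsum_le_tsum fun j => hk j

/-- the dyadic content as an outer measure -/
def HM (n : ℕ) (δ : ℝ) (hδ : 0 < δ) : OuterMeasure (En n) where
  measureOf := dyadicContent n δ
  empty := by
    have := content_le_of_countable (n := n) hδ (ι := Empty) (fun e => e.elim) ∅ (empty_subset _)
    simpa using this
  mono := by
    intro s t hst
    unfold dyadicContent
    exact le_iInf₂ fun c hc => iInf₂_le c (hst.trans hc)
  iUnion_nat := by
    intro s _
    refine ENNReal.le_of_forall_pos_le_add fun ε hε hfin => ?_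
    obtain ⟨ε', hε', hsum⟩ := ENNReal.exists_pos_sum_of_countable
      (ε := (ε : ℝ≥0∞)) (by simpa using hε.ne') ℕ
    have h : ∀ i, ∃ c : ℕ → Cub n, s i ⊆ interior (⋃ j, cset (c j)) ∧
        ∑' j, wt δ (c j) ≤ dyadicContent n δ (s i) + ε' i := by
      intro i
      have hlt : dyadicContent n δ (s i) < dyadicContent n δ (s i) + ε' i := by
        refine ENNReal.lt_add_right ?_ (by simpa using (hε' i).ne')
        exact ne_top_of_le_ne_top hfin.ne (ENNReal.le_tsum i)
      conv_lhs at hlt => unfold dyadicContent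
      simp only [iInf_lt_iff] at hlt
      obtain ⟨c, hc, hlt⟩ := hlt
      exact ⟨c, hc, hlt.le⟩
    choose c hc hle using h
    have h1 := content_le_of_countable (n := n) hδ (ι := ℕ × ℕ) (fun p => c p.1 p.2) (⋃ i, s i) (by
      refine iUnion_subset fun i => (hc i).trans (interior_mono ?_)
      exact iUnion_subset fun j => subset_iUnion (fun p : ℕ × ℕ => cset (c p.1 p.2)) (i, j))
    refine h1.trans ?_
    rw [ENNReal.tsum_prod (f := fun a b => wt δ (c a b))]
    refine (ENNReal.tsum_le_tsum hle).trans ?_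
    rw [ENNReal.tsum_add]
    gcongr

lemma HM_apply {n : ℕ} {δ : ℝ} (hδ : 0 < δ) (E : Set (En n)) :
    HM n δ hδ E = dyadicContent n δ E := rfl

/-- order on cubes -/
def cle {n : ℕ} (Q P : Cub n) : Prop := Q.1 ≤ P.1 ∧ (cset Q ∩ cset P).Nonempty

lemma cle_coord {n : ℕ} {Q P : Cub n} (h : cle Q P) (i : Fin n) :
    (P.2 i : ℝ) * 2 ^ P.1 ≤ Q.2 i * 2 ^ Q.1 ∧
    ((Q.2 i : ℝ) + 1) * 2 ^ Q.1 ≤ (P.2 i + 1) * 2 ^ P.1 := by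
  obtain ⟨hk, x, hxQ, hxP⟩ := h
  obtain ⟨a, b⟩ := hxQ i
  obtain ⟨c, d⟩ := hxP i
  obtain ⟨N, hN⟩ := Int.le.dest hk
  have hpos : (0 : ℝ) < 2 ^ Q.1 := by positivity
  have e : (2 : ℝ) ^ P.1 = ((2 ^ N : ℤ) : ℝ) * 2 ^ Q.1 := by
    rw [← hN, zpow_add₀ (by norm_num)]
    push_cast
    rw [mul_comm, zpow_natCast]
  rw [e, ← mul_assoc] at c d ⊢
  rw [← mul_assoc]
  have h1 := lt_of_mul_lt_mul_right (c.trans_lt b) hpos.le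
  have h2 := lt_of_mul_lt_mul_right (a.trans_lt d) hpos.le
  norm_cast at h1 h2
  constructor
  · refine mul_le_mul_of_nonneg_right ?_ hpos.le
    exact_mod_cast Int.lt_add_one_iff.1 h1
  · refine mul_le_mul_of_nonneg_right ?_ hpos.le
    exact_mod_cast Int.add_one_le_iff.2 h2

lemma cset_nonempty {n : ℕ} (Q : Cub n) : (cset Q).Nonempty := by
  refine ⟨WithLp.toLp 2 (fun i => (Q.2 i : ℝ) * 2 ^ Q.1), ?_⟩
  intro i
  have hpos : (0 : ℝ) < 2 ^ Q.1 := by positivity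
  simp only
  constructor
  · exact le_rfl
  · nlinarith

lemma cle_subset {n : ℕ} {Q P : Cub n} (h : cle Q P) : cset Q ⊆ cset P := by
  intro x hx i
  obtain ⟨a, b⟩ := hx i
  obtain ⟨c, d⟩ := cle_coord h i
  exact ⟨c.trans a, b.trans_le d⟩

lemma cle_refl {n : ℕ} (Q : Cub n) : cle Q Q := ⟨le_rfl, by simpa using cset_nonempty Q⟩

lemma cle_trans {n : ℕ} {Q P R : Cub n} (h : cle Q P) (h' : cle P R) : cle Q R := by
  refine ⟨h.1.trans h'.1, ?_⟩
  obtain ⟨x, hx⟩ := cset_nonempty Q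
  exact ⟨x, hx, cle_subset h' (cle_subset h hx)⟩

lemma eq_of_meet {n : ℕ} {Q P : Cub n} (hk : Q.1 = P.1) (h : (cset Q ∩ cset P).Nonempty) :
    Q = P := by
  obtain ⟨x, hx, hy⟩ := h
  rw [mem_cset] at hx hy
  refine Prod.ext hk (funext fun i => ?_)
  rw [← hx i, ← hy i, hk]

lemma wt_mono {n : ℕ} {δ : ℝ} (hδ : 0 < δ) {Q P : Cub n} (h : Q.1 ≤ P.1) : wt δ Q ≤ wt δ P := by
  unfold wt
  refine ENNReal.ofReal_le_ofReal (Real.rpow_le_rpow (by positivity) ?_ hδ.le)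
  exact zpow_le_zpow_right₀ (by norm_num) h

/-- maximal elements -/
def maxs {n : ℕ} (F : Set (Cub n)) : Set (Cub n) := {Q | Q ∈ F ∧ ∀ P ∈ F, cle Q P → P = Q}

lemma maxs_disj {n : ℕ} {F : Set (Cub n)} {Q P : Cub n} (hQ : Q ∈ maxs F) (hP : P ∈ maxs F)
    (h : (cset Q ∩ cset P).Nonempty) : Q = P := by
  rcases le_total Q.1 P.1 with h1 | h1
  · exact (hQ.2 P hP.1 ⟨h1, h⟩).symm
  · exact hP.2 Q hQ.1 ⟨h1, by rwa [inter_comm]⟩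

lemma exists_maxs {n : ℕ} {F : Set (Cub n)} {K : ℤ} (hK : ∀ Q ∈ F, Q.1 ≤ K) {Q : Cub n}
    (hQ : Q ∈ F) : ∃ P ∈ maxs F, cle Q P := by
  obtain ⟨k, ⟨P, hP, hQP, rfl⟩, hmax⟩ := Int.exists_greatest_of_bdd
    (P := fun k => ∃ P ∈ F, cle Q P ∧ P.1 = k) ⟨K, by rintro _ ⟨P, hP, _, rfl⟩; exact hK P hP⟩
    ⟨Q.1, Q, hQ, cle_refl Q, rfl⟩
  refine ⟨P, ⟨hP, fun R hR hPR => ?_⟩, hQP⟩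
  have := hmax _ ⟨R, hR, cle_trans hQP hPR, rfl⟩
  exact (eq_of_meet (le_antisymm hPR.1 this) hPR.2).symm

lemma exists_bound {n : ℕ} {δ : ℝ} (hδ : 0 < δ) {R : ℝ≥0∞} (hR : R ≠ ⊤) :
    ∃ K : ℤ, ∀ Q : Cub n, wt δ Q ≤ R → Q.1 ≤ K := by
  have h2 : Tendsto (fun m : ℕ => ((2 : ℝ) ^ (m : ℤ)) ^ δ) atTop atTop := by
    refine (tendsto_rpow_atTop hδ).comp ?_
    simpa using tendsto_pow_atTop_atTop_of_one_lt (r := (2 : ℝ)) (by norm_num)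
  obtain ⟨m, hm⟩ := (h2.eventually_gt_atTop R.toReal).exists
  refine ⟨m, fun Q hQ => ?_⟩
  by_contra hlt
  push Not at hlt
  have h3 : wt δ ((m : ℤ), Q.2) ≤ wt δ Q := wt_mono hδ hlt.le
  have h4 : wt δ ((m : ℤ), Q.2) ≤ R := h3.trans hQ
  unfold wt at h4
  rw [ENNReal.ofReal_le_iff_le_toReal hR] at h4
  simp only at h4
  linarith

/-- neighbours -/
def nbr {n : ℕ} (s : ℤ) (Q : Cub n) : Finset (Fin n → ℤ) :=
  Fintype.piFinset fun i => Finset.Icc (Q.2 i - s) (Q.2 i + s)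

lemma card_nbr {n : ℕ} (s : ℕ) (Q : Cub n) : (nbr (s : ℤ) Q).card = (2 * s + 1) ^ n := by
  unfold nbr
  rw [Fintype.card_piFinset]
  have : ∀ i, (Finset.Icc (Q.2 i - (s : ℤ)) (Q.2 i + s)).card = 2 * s + 1 := by
    intro i
    rw [Int.card_Icc]
    omega
  simp [this]

/-- dilated cubes -/
def dil {n : ℕ} (s : ℝ) (Q : Cub n) : Set (En n) :=
  {x | ∀ i, ((Q.2 i : ℝ) - s) * 2 ^ Q.1 ≤ x i ∧ x i < ((Q.2 i : ℝ) + 1 + s) * 2 ^ Q.1}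

lemma dil_subset_nbr {n : ℕ} (s : ℕ) (Q : Cub n) {x : En n} (hx : x ∈ dil s Q) :
    ∃ m ∈ nbr (s : ℤ) Q, x ∈ cset (Q.1, m) := by
  refine ⟨fun i => ⌊x i / 2 ^ Q.1⌋, ?_, by rw [mem_cset]; simp⟩
  unfold nbr
  simp only [Fintype.mem_piFinset, Finset.mem_Icc]
  intro i
  obtain ⟨a, b⟩ := hx i
  have hpos : (0 : ℝ) < 2 ^ Q.1 := by positivity
  constructor
  · rw [Int.le_floor, le_div_iff₀ hpos]
    push_cast
    exact a
  · rw [← Int.lt_add_one_iff, Int.floor_lt, div_lt_iff₀ hpos]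
    push_cast
    linarith

lemma nbr_subset_dil {n : ℕ} (s : ℕ) (Q : Cub n) {x : En n} {m : Fin n → ℤ} 
    (hm : m ∈ nbr (s : ℤ) Q) (hx : x ∈ cset Q) : x ∈ dil s (Q.1, m) := by
  unfold nbr at hm
  simp only [Fintype.mem_piFinset, Finset.mem_Icc] at hm
  intro i
  obtain ⟨a, b⟩ := hx i
  obtain ⟨c, d⟩ := hm i
  have hpos : (0 : ℝ) < 2 ^ Q.1 := by positivity
  have c' : (Q.2 i : ℝ) - s ≤ m i := by exact_mod_cast c
  have d' : (m i : ℝ) ≤ Q.2 i + s := by exact_mod_cast d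
  simp only
  constructor
  · refine le_trans (mul_le_mul_of_nonneg_right ?_ hpos.le) a
    linarith
  · refine lt_of_lt_of_le b (mul_le_mul_of_nonneg_right ?_ hpos.le)
    linarith

lemma dil_mono {n : ℕ} (s : ℕ) {Q P : Cub n} (h : cle Q P) : dil s Q ⊆ dil (n := n) s P := by
  intro x hx i
  obtain ⟨a, b⟩ := hx i
  obtain ⟨c, d⟩ := cle_coord h i
  have h1 : (2 : ℝ) ^ Q.1 ≤ 2 ^ P.1 := zpow_le_zpow_right₀ (by norm_num) h.1
  have h2 : (s : ℝ) * (2 : ℝ) ^ Q.1 ≤ s * 2 ^ P.1 := by gcongr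
  constructor <;> nlinarith

lemma content_dil {n : ℕ} {δ : ℝ} (hδ : 0 < δ) (Q : Cub n) :
    dyadicContent n δ (dil 2 Q) ≤ 7 ^ n * wt δ Q := by
  have h := content_le_of_countable hδ (ι := nbr 3 Q) (fun m => (Q.1, (m : Fin n → ℤ))) (dil 2 Q) ?_
  · refine h.trans ?_
    have : ∀ m : nbr 3 Q, wt δ ((Q.1, (m : Fin n → ℤ)) : Cub n) = wt δ Q := fun m => rfl
    simp only [this]
    rw [tsum_fintype, Finset.sum_const, nsmul_eq_mul, Finset.card_univ, Fintype.card_coe]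
    have := card_nbr 3 Q
    norm_num at this
    rw [this]
    simp
  · have hpos : (0 : ℝ) < 2 ^ Q.1 := by positivity
    let U : Set (En n) := {x | ∀ i, ((Q.2 i : ℝ) - 3) * 2 ^ Q.1 < x i ∧ x i < ((Q.2 i : ℝ) + 1 + 3) * 2 ^ Q.1}
    have hU : IsOpen U := by
      have : U = ⋂ i, {x : En n | ((Q.2 i : ℝ) - 3) * 2 ^ Q.1 < x i} ∩ 
          {x : En n | x i < ((Q.2 i : ℝ) + 1 + 3) * 2 ^ Q.1} := by
        ext x; simp [U]
      rw [this]
      refine isOpen_iInter_of_finite fun i => IsOpen.inter ?_ ?_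
      · exact isOpen_lt continuous_const (by fun_prop)
      · exact isOpen_lt (by fun_prop) continuous_const
    have h1 : dil 2 Q ⊆ U := by
      intro x hx i
      obtain ⟨a, b⟩ := hx i
      constructor <;> nlinarith
    refine h1.trans (interior_maximal ?_ hU)
    intro x hx
    have : x ∈ dil ((3 : ℕ) : ℝ) Q := fun i => by
      push_cast
      exact ⟨(hx i).1.le, (hx i).2⟩
    obtain ⟨m, hm, hx⟩ := dil_subset_nbr 3 Q this
    exact mem_iUnion.2 ⟨⟨m, by exact_mod_cast hm⟩, hx⟩

lemma cset_subset_dil {n : ℕ} (Q : Cub n) : cset Q ⊆ dil 2 Q := by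
  intro x hx i
  obtain ⟨a, b⟩ := hx i
  have hpos : (0 : ℝ) < 2 ^ Q.1 := by positivity
  constructor <;> nlinarith

lemma content_cset {n : ℕ} {δ : ℝ} (hδ : 0 < δ) (Q : Cub n) :
    dyadicContent n δ (cset Q) ≤ 7 ^ n * wt δ Q :=
  ((HM n δ hδ).mono (cset_subset_dil Q)).trans (content_dil hδ Q)

lemma choquet_def {n : ℕ} (δ : ℝ) (Ω : Set (En n)) (g : En n → ℝ≥0∞) :
    choquetIntegral n δ Ω g =
      ∫⁻ t in Ioi (0 : ℝ), dyadicContent n δ {x | x ∈ Ω ∧ ENNReal.ofReal t < g x} := rfl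

lemma content_mono {n : ℕ} {δ : ℝ} (hδ : 0 < δ) {A B : Set (En n)} (h : A ⊆ B) :
    dyadicContent n δ A ≤ dyadicContent n δ B := (HM n δ hδ).mono h

lemma dist_meas {n : ℕ} {δ : ℝ} (hδ : 0 < δ) (Ω : Set (En n)) (g : En n → ℝ≥0∞) :
    Measurable (fun t : ℝ => dyadicContent n δ {x | x ∈ Ω ∧ ENNReal.ofReal t < g x}) := by
  refine Antitone.measurable fun s t hst => content_mono hδ ?_
  rintro x ⟨h1, h2⟩
  exact ⟨h1, (ENNReal.ofReal_le_ofReal hst).trans_lt h2⟩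

lemma choquet_mono {n : ℕ} {δ : ℝ} (hδ : 0 < δ) {Ω Ω' : Set (En n)} (hΩ : Ω ⊆ Ω')
    {g h : En n → ℝ≥0∞} (hgh : ∀ x ∈ Ω, g x ≤ h x) :
    choquetIntegral n δ Ω g ≤ choquetIntegral n δ Ω' h := by
  refine lintegral_mono fun t => content_mono hδ ?_
  rintro x ⟨h1, h2⟩
  exact ⟨hΩ h1, h2.trans_le (hgh x h1)⟩

lemma scale_lintegral {a : ℝ} (ha : 0 < a) (F : ℝ → ℝ≥0∞) :
    ∫⁻ t in Ioi (0 : ℝ), F (t / a) = ENNReal.ofReal a * ∫⁻ t in Ioi (0 : ℝ), F t := by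
  have h := lintegral_image_eq_lintegral_abs_deriv_mul (s := Ioi (0 : ℝ)) (f := fun t => a * t)
    (f' := fun _ => a) measurableSet_Ioi
    (fun x _ => by simpa using ((hasDerivAt_id x).const_mul a).hasDerivWithinAt)
    (fun x _ y _ hxy => mul_left_cancel₀ ha.ne' hxy) (fun t => F (t / a))
  have himg : Set.image (fun t => a * t) (Ioi (0 : ℝ)) = Ioi 0 := by
    ext y
    constructor
    · rintro ⟨x, hx, rfl⟩
      exact mul_pos ha hx
    · intro hy
      exact ⟨y / a, div_pos hy ha, by field_simp⟩
  rw [himg] at h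
  rw [h]
  have : ∀ x : ℝ, F (a * x / a) = F x := fun x => by rw [mul_div_cancel_left₀ x ha.ne']
  simp only [this, abs_of_pos ha]
  rw [lintegral_const_mul' _ _ ENNReal.ofReal_ne_top]

lemma choquet_add_le {n : ℕ} {δ : ℝ} (hδ : 0 < δ) (Ω : Set (En n)) (f g h : En n → ℝ≥0∞)
    {a b : ℝ} (ha : 0 < a) (hb : 0 < b) (hab : 1 / a + 1 / b = 1)
    (hf : ∀ x ∈ Ω, f x ≤ g x + h x) :
    choquetIntegral n δ Ω f ≤ ENNReal.ofReal a * choquetIntegral n δ Ω g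
      + ENNReal.ofReal b * choquetIntegral n δ Ω h := by
  rw [choquet_def _ _ g, choquet_def _ _ h, ← scale_lintegral ha
    (fun t => dyadicContent n δ {x | x ∈ Ω ∧ ENNReal.ofReal t < g x}), ← scale_lintegral hb
    (fun t => dyadicContent n δ {x | x ∈ Ω ∧ ENNReal.ofReal t < h x}), ← lintegral_add_left]
  · refine setLIntegral_mono' measurableSet_Ioi fun t ht => ?_
    refine le_trans (content_mono hδ ?_) (measure_union_le (μ := HM n δ hδ) _ _)
    rintro x ⟨hx, h2⟩
    by_contra hcon
    simp only [mem_union, mem_ofPred_eq, not_or, not_and, not_lt] at hcon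
    have h3 := (hf x hx).trans (add_le_add (hcon.1 hx) (hcon.2 hx))
    have ht' : (0 : ℝ) < t := ht
    rw [← ENNReal.ofReal_add (by positivity) (by positivity)] at h3
    have h4 : t / a + t / b = t := by
      have : t / a + t / b = t * (1 / a + 1 / b) := by ring
      rw [this, hab, mul_one]
    rw [h4] at h3
    exact absurd h2 (not_lt.2 h3)
  · exact (dist_meas hδ Ω g).comp (measurable_id.div_const a)

lemma choquet_iUnion_le {n : ℕ} {δ : ℝ} (hδ : 0 < δ) {ι : Type*} (s : Finset ι)
    (U : ι → Set (En n)) (Ω : Set (En n)) (hΩ : Ω ⊆ ⋃ i ∈ s, U i) (g : En n → ℝ≥0∞) :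
    choquetIntegral n δ Ω g ≤ ∑ i ∈ s, choquetIntegral n δ (U i) g := by
  simp only [choquet_def]
  rw [← lintegral_finsetSum _ (fun i _ => dist_meas hδ (U i) g)]
  refine lintegral_mono fun t => ?_
  refine le_trans (content_mono hδ ?_) (measure_biUnion_finset_le (μ := HM n δ hδ) s
    (fun i => {x | x ∈ U i ∧ ENNReal.ofReal t < g x}))
  rintro x ⟨h1, h2⟩
  obtain ⟨i, hi, hx⟩ := mem_iUnion₂.1 (hΩ h1)
  exact mem_iUnion₂.2 ⟨i, hi, hx, h2⟩

lemma choquet_const {n : ℕ} {δ : ℝ} (hδ : 0 < δ) (Ω : Set (En n)) (c : ℝ) :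
    choquetIntegral n δ Ω (fun _ => ENNReal.ofReal c) = ENNReal.ofReal c * dyadicContent n δ Ω := by
  have h : ∀ t ∈ Ioi (0 : ℝ), dyadicContent n δ {x | x ∈ Ω ∧ ENNReal.ofReal t < ENNReal.ofReal c}
      = (Iio c).indicator (fun _ => dyadicContent n δ Ω) t := by
    intro t ht
    have ht' : 0 < t := ht
    by_cases htc : t < c
    · have : ENNReal.ofReal t < ENNReal.ofReal c :=
        (ENNReal.ofReal_lt_ofReal_iff (ht'.trans htc)).2 htc
      rw [indicator_of_mem (show t ∈ Iio c from htc)]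
      simp [this]
    · have : ¬ ENNReal.ofReal t < ENNReal.ofReal c :=
        not_lt.2 (ENNReal.ofReal_le_ofReal (not_lt.1 htc))
      rw [indicator_of_notMem (show t ∉ Iio c from htc)]
      simp only [this, and_false]
      exact measure_empty (μ := HM n δ hδ)
  rw [choquet_def, setLIntegral_congr_fun measurableSet_Ioi h, lintegral_indicator measurableSet_Iio,
    setLIntegral_const, Measure.restrict_apply measurableSet_Iio, Iio_inter_Ioi, Real.volume_Ioo,
    sub_zero, mul_comm]

lemma choquet_markov {n : ℕ} {δ : ℝ} (hδ : 0 < δ) (Ω : Set (En n)) (g : En n → ℝ≥0∞)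
    (c : ℝ) :
    ENNReal.ofReal c * dyadicContent n δ {x | x ∈ Ω ∧ ENNReal.ofReal c < g x} ≤
      choquetIntegral n δ Ω g := by
  rw [← choquet_const hδ _ c]
  refine choquet_mono hδ (fun x hx => hx.1) ?_
  rintro x ⟨_, h⟩
  exact h.le

lemma rpow_tsum_le {ι : Type*} (a : ι → ℝ≥0∞) {p : ℝ} (hp : 0 < p) (hp1 : p ≤ 1) :
    (∑' i, a i) ^ p ≤ ∑' i, a i ^ p := by
  have hfin : ∀ s : Finset ι, (∑ i ∈ s, a i) ^ p ≤ ∑ i ∈ s, a i ^ p := by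
    intro s
    classical
    induction s using Finset.induction_on with
    | empty => simp [hp]
    | insert i s hi ih =>
      rw [Finset.sum_insert hi, Finset.sum_insert hi]
      exact (ENNReal.rpow_add_le_add_rpow _ _ hp.le hp1).trans (by gcongr)
  have h1 : Tendsto (fun s : Finset ι => (∑ i ∈ s, a i) ^ p) atTop (𝓝 ((∑' i, a i) ^ p)) :=
    ((ENNReal.continuous_rpow_const (y := p)).tendsto _).comp (ENNReal.summable (f := a)).hasSum
  exact le_of_tendsto' h1 fun s => (hfin s).trans (ENNReal.sum_le_tsum s)

lemma volume_cset {n : ℕ} (Q : Cub n) : volume (cset Q) = ENNReal.ofReal ((2 : ℝ) ^ Q.1) ^ n := by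
  have h : cset Q = Set.preimage (@WithLp.ofLp 2 (Fin n → ℝ))
      (Set.pi univ fun i => Ico ((Q.2 i : ℝ) * 2 ^ Q.1) (((Q.2 i : ℝ) + 1) * 2 ^ Q.1)) := by
    ext x
    simp [cset, dyadicCube]
  rw [h, (PiLp.volume_preserving_ofLp (Fin n)).measure_preimage, volume_pi_pi]
  · have : ∀ i, volume (Ico ((Q.2 i : ℝ) * 2 ^ Q.1) (((Q.2 i : ℝ) + 1) * 2 ^ Q.1)) =
        ENNReal.ofReal ((2 : ℝ) ^ Q.1) := by
      intro i
      rw [Real.volume_Ico]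
      congr 1
      ring
    simp [this]
  · exact (MeasurableSet.univ_pi fun i => measurableSet_Ico).nullMeasurableSet

def lowc (n : ℕ) (δ : ℝ) : ℝ≥0∞ := (volume (ball (0 : En n) 1)) ^ (δ / n)

lemma lowc_ne_zero (n : ℕ) (δ : ℝ) : lowc n δ ≠ 0 := by
  unfold lowc
  have h := (measure_ball_pos (volume : Measure (En n)) 0 one_pos)
  exact (ENNReal.rpow_pos h measure_ball_lt_top.ne).ne'

lemma lowc_ne_top (n : ℕ) {δ : ℝ} (hδ : 0 < δ) : lowc n δ ≠ ⊤ :=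
  ENNReal.rpow_ne_top_of_nonneg (by positivity) measure_ball_lt_top.ne

lemma content_ball_ge {n : ℕ} (hn : 1 ≤ n) {δ : ℝ} (hδ : 0 < δ) (hδn : δ ≤ n) (x : En n) {r : ℝ}
    (hr : 0 < r) : ENNReal.ofReal (r ^ δ) * lowc n δ ≤ dyadicContent n δ (ball x r) := by
  unfold dyadicContent
  refine le_iInf₂ fun c hc => ?_
  have hn' : (0 : ℝ) < n := by exact_mod_cast hn
  have h1 : volume (ball x r) ≤ ∑' i, ENNReal.ofReal ((2 : ℝ) ^ (c i).1) ^ n := by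
    calc volume (ball x r) ≤ volume (⋃ i, cset (c i)) := measure_mono (hc.trans interior_subset)
      _ ≤ ∑' i, volume (cset (c i)) := measure_iUnion_le _
      _ = _ := by simp only [volume_cset]
  have h2 : (volume (ball x r)) ^ (δ / n) ≤ ∑' i, (ENNReal.ofReal ((2 : ℝ) ^ (c i).1) ^ n) ^ (δ / n) :=
    (ENNReal.rpow_le_rpow h1 (by positivity)).trans
      (rpow_tsum_le _ (by positivity) ((div_le_one hn').2 hδn))
  have key : ∀ s : ℝ, 0 < s → (ENNReal.ofReal s ^ n) ^ (δ / n) = ENNReal.ofReal (s ^ δ) := by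
    intro s hs
    rw [← ENNReal.rpow_natCast, ← ENNReal.rpow_mul, mul_div_cancel₀ _ hn'.ne',
      ENNReal.ofReal_rpow_of_pos hs]
  have h3 : ∀ i, (ENNReal.ofReal ((2 : ℝ) ^ (c i).1) ^ n) ^ (δ / n) =
      ENNReal.ofReal (((2 : ℝ) ^ (c i).1) ^ δ) := fun i => key _ (by positivity)
  simp only [h3] at h2
  refine le_trans (le_of_eq ?_) h2
  rw [Measure.addHaar_ball_of_pos _ _ hr, ENNReal.mul_rpow_of_nonneg _ _ (by positivity), lowc]
  congr 1
  rw [finrank_euclideanSpace_fin, ENNReal.ofReal_pow hr.le, key r hr]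

open Classical in
/-- total weight of the cubes of `S` below `P` -/
def sig {n : ℕ} (δ : ℝ) (S : Set (Cub n)) (P : Cub n) : ℝ≥0∞ :=
  ∑' Q : Cub n, if Q ∈ S ∧ cle Q P then wt δ Q else 0

lemma exists_packing {n : ℕ} {δ : ℝ} (hδ : 0 < δ) (F : Set (Cub n)) :
    ∃ S ⊆ F, (∀ P, sig δ S P ≤ 2 * wt δ P) ∧ ∀ Q ∈ F, ∃ P, cle Q P ∧ wt δ P ≤ sig δ S P := by
  classical
  obtain ⟨S, -, hS⟩ := zorn_subset_nonempty {S : Set (Cub n) | S ⊆ F ∧ ∀ P, sig δ S P ≤ 2 * wt δ P}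
    (by
      intro c hc hchain hne
      refine ⟨⋃₀ c, ⟨sUnion_subset fun s hs => (hc hs).1, fun P => ?_⟩,
        fun s hs => subset_sUnion_of_mem hs⟩
      unfold sig
      rw [ENNReal.tsum_eq_iSup_sum]
      refine iSup_le fun T => ?_
      obtain ⟨s, hs, hTs⟩ := hchain.directedOn.exists_mem_subset_of_finite_of_subset_sUnion hne
        (s := (T : Set (Cub n)) ∩ ⋃₀ c) (T.finite_toSet.inter_of_left _) inter_subset_right
      refine le_trans ?_ ((hc hs).2 P)
      refine le_trans (Finset.sum_le_sum fun Q hQ => ?_) (ENNReal.sum_le_tsum T)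
      by_cases h : Q ∈ ⋃₀ c ∧ cle Q P
      · rw [if_pos h, if_pos ⟨hTs ⟨hQ, h.1⟩, h.2⟩]
      · rw [if_neg h]
        exact zero_le) ∅ (by simp [sig])
  refine ⟨S, hS.1.1, hS.1.2, fun Q hQ => ?_⟩
  by_cases hQS : Q ∈ S
  · refine ⟨Q, cle_refl Q, ?_⟩
    unfold sig
    refine le_trans ?_ (ENNReal.le_tsum Q)
    rw [if_pos ⟨hQS, cle_refl Q⟩]
  · by_contra hcon
    push Not at hcon
    refine hQS (hS.2 (y := insert Q S) ⟨insert_subset hQ hS.1.1, fun P => ?_⟩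
      (subset_insert Q S) (mem_insert Q S))
    have h1 : sig δ (insert Q S) P ≤ sig δ S P + if cle Q P then wt δ Q else 0 := by
      unfold sig
      have : (if cle Q P then wt δ Q else 0) =
          ∑' R : Cub n, if R = Q then (if cle Q P then wt δ Q else 0) else 0 := by
        rw [tsum_ite_eq]
      rw [this, ← ENNReal.tsum_add]
      refine ENNReal.tsum_le_tsum fun R => ?_
      by_cases hR : R = Q
      · subst hR
        by_cases hP : cle R P <;> simp [hP]
      · simp [hR]
    by_cases hP : cle Q P
    · rw [if_pos hP] at h1
      refine h1.trans ?_
      rw [two_mul]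
      exact add_le_add (hcon P hP).le (wt_mono hδ hP.1)
    · rw [if_neg hP, add_zero] at h1
      exact h1.trans (hS.1.2 P)

lemma packing_sum {n : ℕ} {δ : ℝ} (hδ : 0 < δ) (S : Set (Cub n))
    (hdisj : ∀ Q ∈ S, ∀ P ∈ S, (cset Q ∩ cset P).Nonempty → Q = P)
    (hpack : ∀ P, sig δ S P ≤ 2 * wt δ P) (E : Set (En n)) :
    ∑' Q : S, dyadicContent n δ (cset (Q : Cub n) ∩ E) ≤ 2 * 7 ^ n * dyadicContent n δ E := by
  classical
  have h0 : (2 : ℝ≥0∞) * 7 ^ n ≠ 0 := by positivity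
  have h0' : (2 : ℝ≥0∞) * 7 ^ n ≠ ⊤ := by finiteness
  conv_rhs => unfold dyadicContent
  rw [ENNReal.mul_iInf_of_ne h0 h0']
  refine le_iInf fun c => ?_
  rw [ENNReal.mul_iInf_of_ne h0 h0']
  refine le_iInf fun hc => ?_
  have h1 : ∀ Q : S, dyadicContent n δ (cset (Q : Cub n) ∩ E) ≤
      ∑' i, dyadicContent n δ (cset (Q : Cub n) ∩ cset (c i)) := by
    intro Q
    refine le_trans (content_mono hδ ?_) (measure_iUnion_le (μ := HM n δ hδ)
      fun i => cset (Q : Cub n) ∩ cset (c i))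
    rintro x ⟨hx, hxE⟩
    obtain ⟨i, hi⟩ := mem_iUnion.1 (interior_subset (hc hxE))
    exact mem_iUnion.2 ⟨i, hx, hi⟩
  refine (ENNReal.tsum_le_tsum h1).trans ?_
  rw [ENNReal.tsum_comm, ← ENNReal.tsum_mul_left]
  refine ENNReal.tsum_le_tsum fun i => ?_
  change _ ≤ 2 * 7 ^ n * wt δ (c i)
  set P : Cub n := c i
  have hempty : dyadicContent n δ (∅ : Set (En n)) = 0 := measure_empty (μ := HM n δ hδ)
  by_cases hA : ∃ Q0 ∈ S, cle P Q0
  · obtain ⟨Q0, hQ0, hP⟩ := hA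
    rw [tsum_eq_single (⟨Q0, hQ0⟩ : S)]
    · refine (content_mono hδ inter_subset_right).trans ((content_cset hδ P).trans ?_)
      rw [mul_assoc]
      exact le_mul_of_one_le_left zero_le (by norm_num)
    · intro Q hQ
      have : cset (Q : Cub n) ∩ cset P = ∅ := by
        by_contra hne
        obtain ⟨x, hx, hx'⟩ := nonempty_iff_ne_empty.2 hne
        exact hQ (Subtype.ext (hdisj Q Q.2 Q0 hQ0 ⟨x, hx, cle_subset hP hx'⟩))
      rw [this, hempty]
  · push Not at hA
    have h2 : ∀ Q : S, dyadicContent n δ (cset (Q : Cub n) ∩ cset P) ≤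
        7 ^ n * (if (Q : Cub n) ∈ S ∧ cle (Q : Cub n) P then wt δ (Q : Cub n) else 0) := by
      intro Q
      by_cases hne : (cset (Q : Cub n) ∩ cset P).Nonempty
      · have : cle (Q : Cub n) P := by
          refine ⟨?_, hne⟩
          by_contra hlt
          exact hA Q Q.2 ⟨(not_le.1 hlt).le, by rwa [inter_comm]⟩
        rw [if_pos ⟨Q.2, this⟩]
        exact (content_mono hδ inter_subset_left).trans (content_cset hδ _)
      · rw [not_nonempty_iff_eq_empty.1 hne, hempty]
        exact zero_le
    refine (ENNReal.tsum_le_tsum h2).trans ?_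
    rw [ENNReal.tsum_mul_left]
    have h3 : ∑' Q : S, (if (Q : Cub n) ∈ S ∧ cle (Q : Cub n) P then wt δ (Q : Cub n) else 0) ≤
        sig δ S P := ENNReal.tsum_comp_le_tsum_of_injective Subtype.val_injective _
    calc _ ≤ 7 ^ n * (2 * wt δ P) := by gcongr; exact h3.trans (hpack P)
      _ = _ := by ring

lemma packing_integral {n : ℕ} {δ : ℝ} (hδ : 0 < δ) (S : Set (Cub n))
    (hdisj : ∀ Q ∈ S, ∀ P ∈ S, (cset Q ∩ cset P).Nonempty → Q = P)
    (hpack : ∀ P, sig δ S P ≤ 2 * wt δ P) (g : En n → ℝ≥0∞) :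
    ∑' Q : S, choquetIntegral n δ (cset (Q : Cub n)) g ≤
      2 * 7 ^ n * choquetIntegral n δ univ g := by
  simp only [choquet_def]
  rw [← lintegral_tsum fun Q => (dist_meas hδ _ g).aemeasurable, ← lintegral_const_mul' _ _ (by finiteness)]
  refine lintegral_mono fun t => ?_
  have := packing_sum hδ S hdisj hpack {x | x ∈ univ ∧ ENNReal.ofReal t < g x}
  refine le_trans (le_of_eq ?_) this
  refine tsum_congr fun Q => ?_
  congr 1
  ext x
  simp

/-- covering lemma -/
lemma covering {n : ℕ} {δ : ℝ} (hδ : 0 < δ) (g : En n → ℝ≥0∞)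
    (hg : choquetIntegral n δ univ g ≠ ⊤) {a : ℝ≥0∞} (ha : a ≠ 0) (ha' : a ≠ ⊤) :
    a * dyadicContent n δ (⋃ Q ∈ {Q : Cub n | a * wt δ Q ≤ choquetIntegral n δ (cset Q) g}, dil 2 Q)
      ≤ 2 * 49 ^ n * choquetIntegral n δ univ g := by
  classical
  set F : Set (Cub n) := {Q : Cub n | a * wt δ Q ≤ choquetIntegral n δ (cset Q) g} with hF
  set I := choquetIntegral n δ univ g
  obtain ⟨K, hK⟩ := exists_bound (n := n) hδ (R := I / a) (ENNReal.div_ne_top hg ha)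
  have hFK : ∀ Q ∈ F, Q.1 ≤ K := by
    intro Q hQ
    refine hK Q ?_
    rw [ENNReal.le_div_iff_mul_le (Or.inl ha) (Or.inl ha'), mul_comm]
    exact le_trans hQ (choquet_mono hδ (subset_univ _) fun _ _ => le_rfl)
  obtain ⟨S, hSF, hpack, hcov⟩ := exists_packing hδ (maxs F)
  have hsum : a * ∑' Q : S, wt δ (Q : Cub n) ≤ 2 * 7 ^ n * I := by
    rw [← ENNReal.tsum_mul_left]
    refine le_trans (ENNReal.tsum_le_tsum fun Q => ?_) (packing_integral hδ S
      (fun Q hQ P hP h => maxs_disj (hSF hQ) (hSF hP) h) hpack g)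
    exact (hSF Q.2).1
  set W := ∑' Q : S, wt δ (Q : Cub n) with hW
  have hWtop : W ≠ ⊤ := by
    intro h
    rw [h, ENNReal.mul_top ha] at hsum
    exact absurd hsum (not_le.2 (by finiteness))
  have hWeq : W = ∑' Q : Cub n, if Q ∈ S then wt δ Q else 0 := by
    rw [hW, tsum_subtype S (fun Q => wt δ Q)]
    rfl
  set G : Set (Cub n) := {P | wt δ P ≤ sig δ S P} with hG
  obtain ⟨K', hK'⟩ := exists_bound (n := n) hδ (R := W) hWtop
  have hGK : ∀ Q ∈ G, Q.1 ≤ K' := by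
    intro Q hQ
    refine hK' Q (le_trans hQ ?_)
    rw [hWeq]
    refine ENNReal.tsum_le_tsum fun R => ?_
    by_cases h : R ∈ S
    · by_cases h' : cle R Q <;> simp [h, h']
    · simp [h]
  have hGsum : ∑' P : maxs G, wt δ (P : Cub n) ≤ W := by
    refine le_trans (ENNReal.tsum_le_tsum fun P => P.2.1) ?_
    unfold sig
    rw [ENNReal.tsum_comm, hWeq]
    refine ENNReal.tsum_le_tsum fun Q => ?_
    by_cases hQ : Q ∈ S
    · simp only [hQ, true_and, if_true]
      by_cases hex : ∃ P : maxs G, cle Q (P : Cub n)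
      · obtain ⟨P, hP⟩ := hex
        rw [tsum_eq_single P]
        · rw [if_pos hP]
        · intro R hR
          rw [if_neg]
          intro hQR
          obtain ⟨x, hx⟩ := cset_nonempty Q
          exact hR (Subtype.ext (maxs_disj R.2 P.2 ⟨x, cle_subset hQR hx, cle_subset hP hx⟩))
      · push Not at hex
        simp [hex]
    · simp [hQ]
  have hsub : (⋃ Q ∈ F, dil 2 Q) ⊆ ⋃ P : maxs G, dil 2 (P : Cub n) := by
    refine iUnion₂_subset fun Q hQ => ?_
    obtain ⟨Q1, hQ1, h1⟩ := exists_maxs hFK hQ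
    obtain ⟨P, hP, hPG⟩ := hcov Q1 hQ1
    obtain ⟨P1, hP1, h2⟩ := exists_maxs hGK (show P ∈ G from hPG)
    have := dil_mono 2 (cle_trans h1 (cle_trans hP h2))
    push_cast at this
    exact this.trans (subset_iUnion (fun P : maxs G => dil 2 (P : Cub n)) ⟨P1, hP1⟩)
  have hfin : dyadicContent n δ (⋃ Q ∈ F, dil 2 Q) ≤ 7 ^ n * W := by
    refine (content_mono hδ hsub).trans ((measure_iUnion_le (μ := HM n δ hδ) _).trans ?_)
    refine (ENNReal.tsum_le_tsum fun P : maxs G => content_dil hδ (P : Cub n)).trans ?_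
    rw [ENNReal.tsum_mul_left]
    gcongr
  calc a * dyadicContent n δ (⋃ Q ∈ F, dil 2 Q) ≤ a * (7 ^ n * W) := by gcongr
    _ = 7 ^ n * (a * W) := by ring
    _ ≤ 7 ^ n * (2 * 7 ^ n * I) := by gcongr
    _ = 2 * 49 ^ n * I := by
      rw [show (49 : ℝ≥0∞) = 7 * 7 by norm_num, mul_pow]; ring

lemma ball_subset_dil {n : ℕ} (x : En n) {r : ℝ} {k : ℤ} (hr : r ≤ 2 ^ k) :
    ∃ Q : Cub n, Q.1 = k ∧ x ∈ cset Q ∧ ball x r ⊆ dil 2 Q := by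
  let Q : Cub n := (k, fun i => ⌊x i / 2 ^ k⌋)
  have hxQ : x ∈ cset Q := by rw [mem_cset]; intro i; rfl
  refine ⟨Q, rfl, hxQ, ?_⟩
  intro y hy i
  obtain ⟨a, b⟩ := hxQ i
  have h1 : |y i - x i| < r := by
    have h2 := PiLp.norm_apply_le (y - x) i
    rw [mem_ball, dist_eq_norm] at hy
    exact lt_of_le_of_lt h2 hy
  have hpos : (0 : ℝ) < 2 ^ Q.1 := by positivity
  have hr' : r ≤ 2 ^ Q.1 := hr
  obtain ⟨h3, h4⟩ := abs_lt.1 h1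
  constructor <;> nlinarith

lemma content_ball_ne_top {n : ℕ} {δ : ℝ} (hδ : 0 < δ) (x : En n) {r : ℝ} (hr : 0 < r) :
    dyadicContent n δ (ball x r) ≠ ⊤ := by
  obtain ⟨k, hk⟩ := exists_mem_Ioc_zpow hr (one_lt_two (α := ℝ))
  obtain ⟨Q, -, -, hQ⟩ := ball_subset_dil x hk.2
  refine ne_top_of_le_ne_top ?_ ((content_mono hδ hQ).trans (content_dil hδ Q))
  exact ENNReal.mul_ne_top (by finiteness) (wt_ne_top δ Q)

lemma content_ball_ne_zero {n : ℕ} (hn : 1 ≤ n) {δ : ℝ} (hδ : 0 < δ) (hδn : δ ≤ n) (x : En n)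
    {r : ℝ} (hr : 0 < r) : dyadicContent n δ (ball x r) ≠ 0 := by
  have h := content_ball_ge hn hδ hδn x hr
  intro h0
  rw [h0, nonpos_iff_eq_zero, mul_eq_zero] at h
  rcases h with h | h
  · rw [ENNReal.ofReal_eq_zero] at h
    exact absurd h (not_le.2 (by positivity))
  · exact lowc_ne_zero n δ h

lemma weak_type {n : ℕ} (hn : 1 ≤ n) {δ : ℝ} (hδ : 0 < δ) (hδn : δ ≤ n) :
    ∃ C : ℝ≥0∞, C ≠ ⊤ ∧ ∀ (g : En n → ℝ≥0∞) (L : ℝ≥0∞), L ≠ 0 → L ≠ ⊤ →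
      choquetIntegral n δ univ g ≠ ⊤ →
      L * dyadicContent n δ {x | ∃ r : ℝ, 0 < r ∧
        L * dyadicContent n δ (ball x r) < choquetIntegral n δ (ball x r) g} ≤
      C * choquetIntegral n δ univ g := by
  have hl0 := lowc_ne_zero n δ
  have hlt := lowc_ne_top n hδ
  set c0 := lowc n δ
  set D : ℝ≥0∞ := ENNReal.ofReal (2 ^ δ) * 5 ^ n with hD
  have hD0 : D ≠ 0 := by
    refine mul_ne_zero ?_ (by positivity)
    exact (ENNReal.ofReal_pos.2 (by positivity)).ne'
  have hDt : D ≠ ⊤ := by finiteness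
  refine ⟨D * (2 * 49 ^ n) / c0, ENNReal.div_ne_top (by finiteness) hl0, ?_⟩
  intro g L hL0 hLt hg
  set a : ℝ≥0∞ := L * c0 / D with ha
  have haD : a * D = L * c0 := ENNReal.div_mul_cancel hD0 hDt
  have ha0 : a ≠ 0 := ENNReal.div_ne_zero.2 ⟨mul_ne_zero hL0 hl0, hDt⟩
  have hat : a ≠ ⊤ := ENNReal.div_ne_top (ENNReal.mul_ne_top hLt hlt) hD0
  have hcov := covering hδ g hg ha0 hat
  set A : Set (En n) := {x | ∃ r : ℝ, 0 < r ∧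
        L * dyadicContent n δ (ball x r) < choquetIntegral n δ (ball x r) g} with hA
  set I := choquetIntegral n δ univ g
  have hsub : A ⊆ ⋃ Q ∈ {Q : Cub n | a * wt δ Q ≤ choquetIntegral n δ (cset Q) g}, dil 2 Q := by
    rintro x ⟨r, hr, hx⟩
    obtain ⟨k, hk1, hk2⟩ := exists_mem_Ioc_zpow hr (one_lt_two (α := ℝ))
    obtain ⟨Q, hQk, hxQ, hQ⟩ := ball_subset_dil x hk2
    have hw : wt δ Q ≤ ENNReal.ofReal (2 ^ δ) * ENNReal.ofReal (r ^ δ) := by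
      unfold wt
      rw [← ENNReal.ofReal_mul (by positivity), ← Real.mul_rpow (by norm_num) hr.le]
      refine ENNReal.ofReal_le_ofReal (Real.rpow_le_rpow (by positivity) ?_ hδ.le)
      rw [hQk, zpow_add_one₀ (by norm_num)]
      linarith
    have hub := choquet_iUnion_le hδ (nbr ((2 : ℕ) : ℤ) Q) (fun m => cset ((Q.1, m) : Cub n)) (ball x r)
      (by
        intro y hy
        obtain ⟨m, hm, hy'⟩ := dil_subset_nbr 2 Q (x := y) (by exact_mod_cast hQ hy)
        exact mem_iUnion₂.2 ⟨m, hm, hy'⟩) g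
    have hcard := card_nbr 2 Q
    have hle : ∑ m ∈ nbr ((2 : ℕ) : ℤ) Q, a * wt δ Q ≤
        ∑ m ∈ nbr ((2 : ℕ) : ℤ) Q, choquetIntegral n δ (cset ((Q.1, m) : Cub n)) g := by
      refine le_trans ?_ hub
      refine le_trans ?_ hx.le
      rw [Finset.sum_const, hcard, nsmul_eq_mul]
      norm_num only [Nat.cast_pow, Nat.cast_ofNat]
      calc (5 : ℝ≥0∞) ^ n * (a * wt δ Q)
          ≤ 5 ^ n * (a * (ENNReal.ofReal (2 ^ δ) * ENNReal.ofReal (r ^ δ))) := by gcongr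
        _ = (a * D) * ENNReal.ofReal (r ^ δ) := by
            rw [hD]; ring
        _ = L * (ENNReal.ofReal (r ^ δ) * c0) := by rw [haD]; ring
        _ ≤ L * dyadicContent n δ (ball x r) := by gcongr; exact content_ball_ge hn hδ hδn x hr
    obtain ⟨m, hm, hle⟩ := ENNReal.exists_le_of_sum_le (by
      rw [← Finset.card_pos, hcard]; positivity) hle
    refine mem_iUnion₂.2 ⟨(Q.1, m), hle, ?_⟩
    exact_mod_cast nbr_subset_dil 2 Q hm hxQ
  have h1 : a * dyadicContent n δ A ≤ 2 * 49 ^ n * I :=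
    le_trans (by gcongr; exact content_mono hδ hsub) hcov
  rw [ENNReal.div_eq_inv_mul, mul_assoc, mul_comm c0⁻¹, ← ENNReal.div_eq_inv_mul.trans (mul_comm _ _),
    ENNReal.le_div_iff_mul_le (Or.inl hl0) (Or.inl hlt)]
  calc L * dyadicContent n δ A * c0 = D * (a * dyadicContent n δ A) := by
        rw [mul_right_comm, ← haD]; ring
    _ ≤ D * (2 * 49 ^ n * I) := by gcongr
    _ = _ := by ring

lemma pointwise_bounds {n : ℕ} (hn : 1 ≤ n) {δ : ℝ} (hδ : 0 < δ) (hδn : δ ≤ n)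
    (f φ : En n → ℝ) (hpos : ∀ x, 0 ≤ f x) (hφ : Continuous φ) (x : En n) {q : ℝ} (hq : 0 < q)
    (h1 : |f x - φ x| ≤ q)
    (h2 : ∀ r : ℝ, 0 < r → choquetIntegral n δ (ball x r) (fun y => ENNReal.ofReal |f y - φ y|) ≤
      ENNReal.ofReal q * dyadicContent n δ (ball x r))
    {a b : ℝ} (ha : 0 < a) (hb : 0 < b) (hab : 1 / a + 1 / b = 1) :
    limsupAvg n δ (fun y => ENNReal.ofReal (f y)) x ≤ ENNReal.ofReal (a * (f x + 2 * q) + b * q) ∧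
    ENNReal.ofReal (f x - 2 * q) ≤
      ENNReal.ofReal a * limsupAvg n δ (fun y => ENNReal.ofReal (f y)) x + ENNReal.ofReal (b * q) := by
  obtain ⟨ρ, hρ, hclose⟩ := Metric.continuousAt_iff.1 (hφ.continuousAt (x := x)) q hq
  have hev : ∀ᶠ r in 𝓝[>] (0 : ℝ), r ∈ Ioo 0 ρ := Ioo_mem_nhdsGT hρ
  have hnear : ∀ r ∈ Ioo 0 ρ, ∀ y ∈ ball x r, |φ y - φ x| ≤ q := by
    intro r hr y hy
    have : dist y x < ρ := lt_trans (mem_ball.1 hy) hr.2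
    have := hclose this
    rw [Real.dist_eq] at this
    exact this.le
  unfold limsupAvg
  constructor
  · refine limsup_le_of_le (by isBoundedDefault) ?_
    filter_upwards [hev] with r hr
    unfold ballAvg
    refine ENNReal.div_le_of_le_mul ?_
    refine (choquet_add_le hδ (ball x r) _ (fun _ => ENNReal.ofReal (f x + 2 * q))
      (fun y => ENNReal.ofReal |f y - φ y|) ha hb hab ?_).trans ?_
    · intro y hy
      rw [← ENNReal.ofReal_add (by have := hpos x; positivity) (abs_nonneg _)]
      refine ENNReal.ofReal_le_ofReal ?_
      have h3 := hnear r hr y hy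
      have h4 := abs_le.1 h3
      have h5 := abs_le.1 h1
      have h6 := le_abs_self (f y - φ y)
      linarith
    · rw [choquet_const hδ]
      have h7 := h2 r hr.1
      have h8 := hpos x
      rw [ENNReal.ofReal_add (p := a * (f x + 2 * q)) (by positivity) (by positivity), ENNReal.ofReal_mul ha.le,
        ENNReal.ofReal_mul hb.le, add_mul, mul_assoc, mul_assoc]
      gcongr
  · rw [← tsub_le_iff_right]
    have ha0 : ENNReal.ofReal a ≠ 0 := (ENNReal.ofReal_pos.2 ha).ne'
    rw [mul_comm (ENNReal.ofReal a), ← ENNReal.div_le_iff_le_mul (Or.inl ha0) (Or.inl ENNReal.ofReal_ne_top)]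
    refine le_limsup_of_frequently_le (Eventually.frequently ?_) (by isBoundedDefault)
    filter_upwards [hev] with r hr
    rw [ENNReal.div_le_iff_le_mul (Or.inl ha0) (Or.inl ENNReal.ofReal_ne_top), tsub_le_iff_right]
    have hH0 := content_ball_ne_zero hn hδ hδn x hr.1
    have hHt := content_ball_ne_top hδ x hr.1
    have h3 : choquetIntegral n δ (ball x r) (fun _ => ENNReal.ofReal (f x - 2 * q)) ≤ _ :=
      choquet_add_le hδ (ball x r) _ (fun y => ENNReal.ofReal (f y))
      (fun y => ENNReal.ofReal |f y - φ y|) ha hb hab (by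
        intro y hy
        rw [← ENNReal.ofReal_add (hpos y) (abs_nonneg _)]
        refine ENNReal.ofReal_le_ofReal ?_
        have h3 := hnear r hr y hy
        have h4 := abs_le.1 h3
        have h5 := abs_le.1 h1
        have h6 := neg_abs_le (f y - φ y)
        linarith)
    rw [choquet_const hδ] at h3
    refine (ENNReal.mul_le_mul_iff_left hH0 hHt).1 (h3.trans ?_)
    rw [add_mul, ENNReal.ofReal_mul hb.le, mul_assoc (ENNReal.ofReal b)]
    refine add_le_add (le_of_eq ?_) (mul_le_mul_right (h2 r hr.1) _)
    unfold ballAvg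
    rw [mul_comm _ (ENNReal.ofReal a), mul_assoc, ENNReal.div_mul_cancel hH0 hHt]

/-- if a nonnegative `f ∈ nL¹(ℝⁿ, H̃^δ_∞)` is an `nL¹`-limit of continuous
functions, then `f(x) = limsup_{r→0⁺} f^δ_{B(x,r)}` for `H̃^δ_∞`-almost every `x`. -/
theorem limsup_avg_eq_of_nL1_limit (n : ℕ) (hn : 1 ≤ n)
    (δ : ℝ) (hδ0 : 0 < δ) (hδn : δ ≤ n)
    (f : En n → ℝ) (hpos : ∀ x, 0 ≤ f x)
    (hf : choquetIntegralAbs n δ univ f < ⊤)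
    (hlimit : ∃ φ : ℕ → En n → ℝ, (∀ i, Continuous (φ i)) ∧
      Tendsto (fun i => choquetIntegralAbs n δ univ (fun x => f x - φ i x))
        atTop (𝓝 0)) :
    ∃ E : Set (En n), dyadicContent n δ E = 0 ∧
      ∀ x ∉ E, ENNReal.ofReal (f x) =
        limsupAvg n δ (fun y => ENNReal.ofReal (f y)) x := by
  obtain ⟨φ, hφ, hlim⟩ := hlimit
  obtain ⟨C, hC, hweak⟩ := weak_type hn hδ0 hδn
  have hq : ∀ j : ℕ, (0 : ℝ) < (1 / 2) ^ j := fun j => by positivity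
  have hidx : ∀ j : ℕ, ∃ i, choquetIntegralAbs n δ univ (fun x => f x - φ i x) ≤
      ENNReal.ofReal ((1 / 2) ^ j) * ENNReal.ofReal ((1 / 2) ^ j) := by
    intro j
    have h0 : (0 : ℝ≥0∞) < ENNReal.ofReal ((1 / 2) ^ j) * ENNReal.ofReal ((1 / 2) ^ j) :=
      ENNReal.mul_pos (ENNReal.ofReal_pos.2 (hq j)).ne' (ENNReal.ofReal_pos.2 (hq j)).ne'
    obtain ⟨i, hi⟩ := (hlim.eventually_lt_const h0).exists
    exact ⟨i, hi.le⟩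
  choose ix hix using hidx
  let g : ℕ → En n → ℝ≥0∞ := fun j y => ENNReal.ofReal |f y - φ (ix j) y|
  let L : ℕ → ℝ≥0∞ := fun j => ENNReal.ofReal ((1 / 2) ^ j)
  have hL0 : ∀ j, L j ≠ 0 := fun j => (ENNReal.ofReal_pos.2 (hq j)).ne'
  have hLt : ∀ j, L j ≠ ⊤ := fun j => ENNReal.ofReal_ne_top
  have hI : ∀ j, choquetIntegral n δ univ (g j) ≤ L j * L j := hix
  let A : ℕ → Set (En n) := fun j => {x | ∃ r : ℝ, 0 < r ∧
        L j * dyadicContent n δ (ball x r) < choquetIntegral n δ (ball x r) (g j)}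
  let B : ℕ → Set (En n) := fun j => {x | x ∈ univ ∧ L j < g j x}
  have hAle : ∀ j, dyadicContent n δ (A j) ≤ C * L j := by
    intro j
    have h1 := hweak (g j) (L j) (hL0 j) (hLt j)
      (ne_top_of_le_ne_top (ENNReal.mul_ne_top (hLt j) (hLt j)) (hI j))
    have h2 : L j * dyadicContent n δ (A j) ≤ L j * (C * L j) :=
      h1.trans ((mul_le_mul_right (hI j) C).trans (le_of_eq (by ring)))
    exact (ENNReal.mul_le_mul_iff_right (hL0 j) (hLt j)).1 h2
  have hBle : ∀ j, dyadicContent n δ (B j) ≤ L j := by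
    intro j
    have h1 : L j * dyadicContent n δ (B j) ≤ L j * L j :=
      (choquet_markov hδ0 univ (g j) ((1 / 2) ^ j)).trans (hI j)
    exact (ENNReal.mul_le_mul_iff_right (hL0 j) (hLt j)).1 h1
  have hLsum : ∑' j, L j ≠ ⊤ := by
    have hs : Summable (fun j : ℕ => ((1 / 2 : ℝ)) ^ j) :=
      summable_geometric_of_lt_one (by norm_num) (by norm_num)
    exact hs.tsum_ofReal_ne_top
  have hsum : ∑' j, HM n δ hδ0 (A j ∪ B j) ≠ ⊤ := by
    have h1 : ∀ j, HM n δ hδ0 (A j ∪ B j) ≤ (C + 1) * L j := by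
      intro j
      refine (measure_union_le (μ := HM n δ hδ0) _ _).trans ?_
      rw [add_mul, one_mul]
      exact add_le_add (hAle j) (hBle j)
    refine ne_top_of_le_ne_top ?_ (ENNReal.tsum_le_tsum h1)
    rw [ENNReal.tsum_mul_left]
    exact ENNReal.mul_ne_top (by finiteness) hLsum
  refine ⟨limsup (fun j => A j ∪ B j) atTop, measure_limsup_atTop_eq_zero (μ := HM n δ hδ0) hsum, ?_⟩
  intro x hx
  rw [mem_limsup_iff_frequently_mem, not_frequently] at hx
  have hqlim : Tendsto (fun j : ℕ => (1 / 2 : ℝ) ^ j) atTop (𝓝 0) :=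
    tendsto_pow_atTop_nhds_zero_of_lt_one (by norm_num) (by norm_num)
  have hb : ∀ a : ℝ, 1 < a → ∃ b : ℝ, 0 < b ∧ 1 / a + 1 / b = 1 := by
    intro a ha
    have : 0 < a - 1 := by linarith
    refine ⟨a / (a - 1), by positivity, ?_⟩
    field_simp
    ring
  set Λ := limsupAvg n δ (fun y => ENNReal.ofReal (f y)) x with hΛ
  have main : ∀ a : ℝ, 1 < a → Λ ≤ ENNReal.ofReal (a * f x) ∧ ENNReal.ofReal (f x) ≤ ENNReal.ofReal a * Λ := by
    intro a ha
    obtain ⟨b, hb0, hab⟩ := hb a ha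
    have hev : ∀ᶠ j in atTop, Λ ≤ ENNReal.ofReal (a * (f x + 2 * (1 / 2) ^ j) + b * (1 / 2) ^ j) ∧
        ENNReal.ofReal (f x - 2 * (1 / 2) ^ j) ≤
          ENNReal.ofReal a * Λ + ENNReal.ofReal (b * (1 / 2) ^ j) := by
      filter_upwards [hx] with j hj
      have hjA : x ∉ A j := fun h => hj (Or.inl h)
      have hjB : x ∉ B j := fun h => hj (Or.inr h)
      refine pointwise_bounds hn hδ0 hδn f (φ (ix j)) hpos (hφ _) x (hq j) ?_ ?_ (by linarith) hb0 hab
      · by_contra hlt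
        exact hjB ⟨mem_univ x, (ENNReal.ofReal_lt_ofReal_iff ((hq j).trans (not_le.1 hlt))).2
          (not_le.1 hlt)⟩
      · intro r hr
        by_contra hlt
        exact hjA ⟨r, hr, not_le.1 hlt⟩
    constructor
    · have ht : Tendsto (fun j : ℕ => ENNReal.ofReal (a * (f x + 2 * (1 / 2) ^ j) + b * (1 / 2) ^ j))
          atTop (𝓝 (ENNReal.ofReal (a * (f x + 2 * 0) + b * 0))) :=
        ENNReal.tendsto_ofReal
          (((hqlim.const_mul 2).const_add (f x) |>.const_mul a).add (hqlim.const_mul b))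
      have := ge_of_tendsto ht (hev.mono fun j hj => hj.1)
      simpa using this
    · have ht1 : Tendsto (fun j : ℕ => ENNReal.ofReal (f x - 2 * (1 / 2) ^ j))
          atTop (𝓝 (ENNReal.ofReal (f x - 2 * 0))) :=
        ENNReal.tendsto_ofReal ((hqlim.const_mul 2).const_sub (f x))
      have ht2 : Tendsto (fun j : ℕ => ENNReal.ofReal a * Λ + ENNReal.ofReal (b * (1 / 2) ^ j))
          atTop (𝓝 (ENNReal.ofReal a * Λ + ENNReal.ofReal (b * 0))) :=
        tendsto_const_nhds.add (ENNReal.tendsto_ofReal (hqlim.const_mul b))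
      have := le_of_tendsto_of_tendsto ht1 ht2 (hev.mono fun j hj => hj.2)
      simpa using this
  have hid : Tendsto (fun a : ℝ => a) (𝓝[>] 1) (𝓝 1) := tendsto_id.mono_left nhdsWithin_le_nhds
  have hgt : ∀ᶠ a in 𝓝[>] (1 : ℝ), 1 < a := self_mem_nhdsWithin
  apply le_antisymm
  · have ht : Tendsto (fun a : ℝ => ENNReal.ofReal a * Λ) (𝓝[>] 1) (𝓝 (ENNReal.ofReal 1 * Λ)) :=
      ENNReal.Tendsto.mul_const (ENNReal.tendsto_ofReal hid) (Or.inl (by simp))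
    have := ge_of_tendsto ht (hgt.mono fun a ha => (main a ha).2)
    simpa using this
  · have ht : Tendsto (fun a : ℝ => ENNReal.ofReal (a * f x)) (𝓝[>] 1) (𝓝 (ENNReal.ofReal (1 * f x))) :=
      ENNReal.tendsto_ofReal (hid.mul_const (f x))
    have := ge_of_tendsto ht (hgt.mono fun a ha => (main a ha).1)
    simpa using this
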